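/- (Zigzag property of chains at a Q-node.) Let I_1 ∈ comp(N_{i_1}), I_2 ∈ comp(N_{i_2}), I_3 ∈ comp(N_{i_3}) with i_1 ≠ i_2, I_1 ≠ I_2, I_2 ≠ I_3, C(I_1) ⊆ C(I_2) and C(I_2) ⊆ C(I_3). Then: if i_1 < i_2 then i_1 < i_3, and if i_1 > i_2 then i_1 > i_3. -/

import Mathlib

open Set

variable {Λ W ι : Type*}

/-- The clique of a leaf: vertices whose `Cl`-set contains the leaf. -/
def leafC (Cl : W → Set Λ) (ℓ : Λ) : Set W := {v | ℓ ∈ Cl v}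

/-- `V(N)`: vertices with `Cl(v) ⊆ N`. -/
def Vset (Cl : W → Set Λ) (N : Set Λ) : Set W := {v | Cl v ⊆ N}

/-- `U(N)`: vertices with `Cl(v) = N`. -/
def Uset (Cl : W → Set Λ) (N : Set Λ) : Set W := {v | Cl v = N}

/-- `I(N)`: vertices with `Cl(v) ⊊ N`. -/
def Iset (Cl : W → Set Λ) (N : Set Λ) : Set W := {v | Cl v ⊂ N}

/-- `E(N)`: vertices with `N ⊊ Cl(v)`. -/
def Eset (Cl : W → Set Λ) (N : Set Λ) : Set W := {v | N ⊂ Cl v}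

/-- A vertex is compatible with a node `N`. -/
def Compatible (Cl : W → Set Λ) (v : W) (N : Set Λ) : Prop :=
  Cl v ⊆ N ∨ N ⊆ Cl v ∨ Cl v ∩ N = ∅

/-- `inner(N)`: for a singleton node `{ℓ}` the components with `C(I) = C(ℓ)`;
for a non-singleton node the components with `C(I) ∩ I(N) ≠ ∅` and
`U(N) ∪ E(N) ⊊ C(I)`. -/
def innerSet (Cl : W → Set Λ) (CI : ι → Set W) (N : Set Λ) : Set ι :=
  {I | (∃ ℓ, N = {ℓ} ∧ CI I = leafC Cl ℓ) ∨
       ((¬ ∃ ℓ, N = {ℓ}) ∧ (CI I ∩ Iset Cl N).Nonempty ∧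
        Uset Cl N ∪ Eset Cl N ⊂ CI I)}

/-- `middle_M(N) = {I ∈ inner(M) \ inner(N) : C(I) ∩ V(N) ≠ ∅}`. -/
def middleSet (Cl : W → Set Λ) (CI : ι → Set W) (M N : Set Λ) : Set ι :=
  {I | I ∈ innerSet Cl CI M ∧ I ∉ innerSet Cl CI N ∧ (CI I ∩ Vset Cl N).Nonempty}

/-- `J(v) = {i ∈ [k] : N_i ⊆ Cl(v)}`. -/
def Jnat (Cl : W → Set Λ) (N : ℕ → Set Λ) (k : ℕ) (v : W) : Set ℕ :=
  {i | i ∈ Set.Icc 1 k ∧ N i ⊆ Cl v}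

/-- `I'(Q) = I(Q) \ ⋃ᵢ V(Nᵢ)`. -/
def IprimeQ (Cl : W → Set Λ) (Q : Set Λ) (N : ℕ → Set Λ) (k : ℕ) : Set W :=
  Iset Cl Q \ ⋃ i ∈ Set.Icc 1 k, Vset Cl (N i)

/-- `rest(Q) = inner(Q) \ ⋃ᵢ (middle_Q(Nᵢ) ∪ inner(Nᵢ))`. -/
def restQ (Cl : W → Set Λ) (CI : ι → Set W) (Q : Set Λ) (N : ℕ → Set Λ) (k : ℕ) : Set ι :=
  innerSet Cl CI Q \
    ⋃ i ∈ Set.Icc 1 k, (middleSet Cl CI Q (N i) ∪ innerSet Cl CI (N i))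

/-- `J(I) = ⋂_{v ∈ C(I) ∩ I'(Q)} J(v)`. -/
def JIset (Cl : W → Set Λ) (CI : ι → Set W) (Q : Set Λ) (N : ℕ → Set Λ) (k : ℕ)
    (I : ι) : Set ℕ :=
  ⋂ v ∈ CI I ∩ IprimeQ Cl Q N k, Jnat Cl N k v

/-- A set of naturals is an interval (order-convex). -/
def IsIntervalIn (s : Set ℕ) : Prop :=
  ∀ a b c : ℕ, a ≤ b → b ≤ c → a ∈ s → c ∈ s → b ∈ s

/-- `j₁`, the left endpoint of `J(I)`. -/
noncomputable def jLo (Cl : W → Set Λ) (CI : ι → Set W) (Q : Set Λ) (N : ℕ → Set Λ)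
    (k : ℕ) (I : ι) : ℕ :=
  sInf (JIset Cl CI Q N k I)

/-- `j₂`, the right endpoint of `J(I)`. -/
noncomputable def jHi (Cl : W → Set Λ) (CI : ι → Set W) (Q : Set Λ) (N : ℕ → Set Λ)
    (k : ℕ) (I : ι) : ℕ :=
  sSup (JIset Cl CI Q N k I)

/-- `I ∈ rest(Q)` with `J(I) = [j₁, j₂]` is discarded if there are
`v, v' ∈ I'(Q) ∖ C(I)` with `{j₁−1, j₁} ⊆ J(v)` and `{j₂, j₂+1} ⊆ J(v')`. -/
def Discarded (Cl : W → Set Λ) (CI : ι → Set W) (Q : Set Λ) (N : ℕ → Set Λ)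
    (k : ℕ) (I : ι) : Prop :=
  (∃ v ∈ IprimeQ Cl Q N k \ CI I,
      jLo Cl CI Q N k I - 1 ∈ Jnat Cl N k v ∧ jLo Cl CI Q N k I ∈ Jnat Cl N k v) ∧
  (∃ v ∈ IprimeQ Cl Q N k \ CI I,
      jHi Cl CI Q N k I ∈ Jnat Cl N k v ∧ jHi Cl CI Q N k I + 1 ∈ Jnat Cl N k v)

/-- `outer(Nᵢ)`: the non-discarded components of `rest(Q)` assigned to `Nᵢ`. -/
def outerSet (Cl : W → Set Λ) (CI : ι → Set W) (Q : Set Λ) (N : ℕ → Set Λ)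
    (k : ℕ) (i : ℕ) : Set ι :=
  {I | I ∈ restQ Cl CI Q N k ∧ ¬ Discarded Cl CI Q N k I ∧
    ((jLo Cl CI Q N k I = jHi Cl CI Q N k I ∧ i = jLo Cl CI Q N k I) ∨
     (jLo Cl CI Q N k I < jHi Cl CI Q N k I ∧ i = jLo Cl CI Q N k I ∧
       ¬ ∃ v ∈ IprimeQ Cl Q N k \ CI I,
           jLo Cl CI Q N k I - 1 ∈ Jnat Cl N k v ∧
           jLo Cl CI Q N k I ∈ Jnat Cl N k v) ∨
     (jLo Cl CI Q N k I < jHi Cl CI Q N k I ∧ i = jHi Cl CI Q N k I ∧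
       ¬ ∃ v ∈ IprimeQ Cl Q N k \ CI I,
           jHi Cl CI Q N k I ∈ Jnat Cl N k v ∧
           jHi Cl CI Q N k I + 1 ∈ Jnat Cl N k v))}

/-- `comp(Nᵢ) = middle_Q(Nᵢ) ∪ inner(Nᵢ) ∪ outer(Nᵢ)`. -/
def compSet (Cl : W → Set Λ) (CI : ι → Set W) (Q : Set Λ) (N : ℕ → Set Λ)
    (k : ℕ) (i : ℕ) : Set ι :=
  middleSet Cl CI Q (N i) ∪ innerSet Cl CI (N i) ∪ outerSet Cl CI Q N k i

/-- The relation `⊑_Q` on (indices of) children of the Q-node: for `a < b`,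
`N_a ⊑_Q N_b` iff some `v ∈ I'(Q)` has `a ∉ J(v)` and `{b, b+1} ⊆ J(v)`; for
`b < a`, `N_a ⊑_Q N_b` iff some `v ∈ I'(Q)` has `{b−1, b} ⊆ J(v)` and `a ∉ J(v)`. -/
def sqQN (Cl : W → Set Λ) (Q : Set Λ) (N : ℕ → Set Λ) (k : ℕ) (a b : ℕ) : Prop :=
  (a < b ∧ ∃ v ∈ IprimeQ Cl Q N k,
      a ∉ Jnat Cl N k v ∧ b ∈ Jnat Cl N k v ∧ b + 1 ∈ Jnat Cl N k v) ∨
  (b < a ∧ ∃ v ∈ IprimeQ Cl Q N k,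
      b - 1 ∈ Jnat Cl N k v ∧ b ∈ Jnat Cl N k v ∧ a ∉ Jnat Cl N k v)

/-
Every component `I` placed at `Nᵢ` satisfies `i ∈ J(I)`, and `J` is antitone in `C(I)`. If
`C(I₁) ⊆ C(I₂)` and the two components are placed at different parts, then a leaf whose clique
contains `C(I₂)` shows that `I₁` is outer. So `i₁` is an endpoint of `J(I₁)`, say the left one, and
`C(I₁)` contains every `v ∈ I'(Q)` with `{i₁−1, i₁} ⊆ J(v)`. Since `i₂, i₃ ∈ J(I₁)`, this gives
`i₁ < i₂` and `i₁ ≤ i₃`. If `i₁ = i₃`, then `I₂` is outer as well, with `i₂` the right endpoint of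
`J(I₂)`, and `C(I₂)` contains all `v ∈ I'(Q)` with `{i₁−1, i₁} ⊆ J(v)` or `{i₂, i₂+1} ⊆ J(v)`;
Property (Q) for `i₁ < i₂` forbids this.
-/

/-- Property (Q) of a Q-node `Q` with parts `N₁, …, Nₖ`: any two parts other than the pair `N₁, Nₖ`
are separated by a set `J(v)`, `v ∈ I'(Q)`, that contains exactly one of the two indices together
with the neighbour of that index on the side away from the other one. -/
def PropertyQ (Cl : W → Set Λ) (Q : Set Λ) (N : ℕ → Set Λ) (k : ℕ) : Prop :=
  ∀ j₁ j₂ : ℕ, 1 ≤ j₁ → j₁ < j₂ → j₂ ≤ k → (j₁, j₂) ≠ (1, k) →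
    ∃ v ∈ IprimeQ Cl Q N k,
      (j₁ ∉ Jnat Cl N k v ∧ j₂ ∈ Jnat Cl N k v ∧ j₂ + 1 ∈ Jnat Cl N k v) ∨
      (j₁ - 1 ∈ Jnat Cl N k v ∧ j₁ ∈ Jnat Cl N k v ∧ j₂ ∉ Jnat Cl N k v)

/-- `S` is anchored in `M` if it meets `V(M)`, or if `M` is a single leaf whose leaf clique is `S`.
This merges `middle_Q(Nᵢ)` and `inner(Nᵢ)`: a component `I ∈ inner(Q)` lies in their union exactly
when `C(I)` is anchored in `Nᵢ`. -/
def IsAnchored (Cl : W → Set Λ) (S : Set W) (M : Set Λ) : Prop :=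
  (S ∩ Vset Cl M).Nonempty ∨ ∃ ℓ, M = {ℓ} ∧ S = leafC Cl ℓ

/-- `S` contains every `v ∈ I'(Q)` with `{j−1, j} ⊆ J(v)`. Failure of this for `C(I)` at the left
endpoint of `J(I)` is one half of being discarded. For `j = 1` it holds trivially, as `0 ∉ [k]`. -/
def LeftSaturated (Cl : W → Set Λ) (Q : Set Λ) (N : ℕ → Set Λ) (k : ℕ) (S : Set W) (j : ℕ) :
    Prop :=
  ∀ v ∈ IprimeQ Cl Q N k, j - 1 ∈ Jnat Cl N k v → j ∈ Jnat Cl N k v → v ∈ S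

/-- `S` contains every `v ∈ I'(Q)` with `{j, j+1} ⊆ J(v)`. Failure of this for `C(I)` at the right
endpoint of `J(I)` is the other half of being discarded. For `j = k` it holds trivially, as
`k + 1 ∉ [k]`. -/
def RightSaturated (Cl : W → Set Λ) (Q : Set Λ) (N : ℕ → Set Λ) (k : ℕ) (S : Set W) (j : ℕ) :
    Prop :=
  ∀ v ∈ IprimeQ Cl Q N k, j ∈ Jnat Cl N k v → j + 1 ∈ Jnat Cl N k v → v ∈ S

section

variable {Cl : W → Set Λ} {CI : ι → Set W} {Q M : Set Λ} {N : ℕ → Set Λ} {k i j : ℕ} {I I' : ι}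
  {S T : Set W} {x : Λ}

theorem exists_subset_leafC (h : (⋂ v ∈ S, Cl v).Nonempty) : ∃ x, S ⊆ leafC Cl x :=
  Exists.imp (fun _ hx => mem_iInter₂.1 hx) h

namespace IsAnchored

theorem mem_of_subset_leafC (hleaf : ∀ ℓ ℓ' : Λ, ℓ ≠ ℓ' → ¬ leafC Cl ℓ ⊆ leafC Cl ℓ')
    (h : IsAnchored Cl S M) (hx : S ⊆ leafC Cl x) : x ∈ M := by
  rcases h with ⟨v, hvS, hvM⟩ | ⟨ℓ, rfl, rfl⟩
  · exact hvM (hx hvS)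
  · by_contra hne
    exact hleaf ℓ x (Ne.symm hne) hx

theorem mono (hleaf : ∀ ℓ ℓ' : Λ, ℓ ≠ ℓ' → ¬ leafC Cl ℓ ⊆ leafC Cl ℓ')
    (h : IsAnchored Cl S M) (hST : S ⊆ T) (hx : T ⊆ leafC Cl x) : IsAnchored Cl T M := by
  have hxM : x ∈ M := h.mem_of_subset_leafC hleaf (hST.trans hx)
  rcases h with h | ⟨ℓ, rfl, rfl⟩
  · exact .inl (h.mono (inter_subset_inter_left _ hST))
  · obtain rfl : x = ℓ := hxM
    exact .inr ⟨x, rfl, hx.antisymm hST⟩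

end IsAnchored

theorem isAnchored_of_mem_innerSet (h : I ∈ innerSet Cl CI M) : IsAnchored Cl (CI I) M := by
  rcases h with h | ⟨_, ⟨v, hvI, hvM⟩, _⟩
  · exact .inr h
  · exact .inl ⟨v, hvI, hvM.1⟩

theorem isAnchored_or_mem_outerSet (h : I ∈ compSet Cl CI Q N k i) :
    IsAnchored Cl (CI I) (N i) ∨ I ∈ outerSet Cl CI Q N k i := by
  rcases h with (hmiddle | hinner) | houter
  · exact .inl (.inl hmiddle.2.2)
  · exact .inl (isAnchored_of_mem_innerSet hinner)
  · exact .inr houter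

theorem not_isAnchored_of_mem_restQ (h : I ∈ restQ Cl CI Q N k) (hi : i ∈ Icc 1 k) :
    ¬ IsAnchored Cl (CI I) (N i) := by
  have hinner : I ∉ innerSet Cl CI (N i) := fun hI => h.2 (mem_biUnion hi (.inr hI))
  rintro (hmeet | hleaf)
  · exact h.2 (mem_biUnion hi (.inl ⟨h.1, hinner, hmeet⟩))
  · exact hinner (.inl hleaf)

theorem mem_outerSet_of_subset (hleaf : ∀ ℓ ℓ' : Λ, ℓ ≠ ℓ' → ¬ leafC Cl ℓ ⊆ leafC Cl ℓ')
    (hHelly : (⋂ v ∈ CI I', Cl v).Nonempty) (hi : i ∈ Icc 1 k) (hN : N i ∩ N j = ∅)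
    (hI : I ∈ compSet Cl CI Q N k i) (hI' : I' ∈ compSet Cl CI Q N k j) (hsub : CI I ⊆ CI I') :
    I ∈ outerSet Cl CI Q N k i := by
  refine (isAnchored_or_mem_outerSet hI).resolve_left fun hanch => ?_
  obtain ⟨x, hx⟩ := exists_subset_leafC hHelly
  have hanch' : IsAnchored Cl (CI I') (N i) := hanch.mono hleaf hsub hx
  rcases isAnchored_or_mem_outerSet hI' with hanchj | houter
  · exact (disjoint_iff_inter_eq_empty.2 hN).notMem_of_mem_left
      (hanch'.mem_of_subset_leafC hleaf hx) (hanchj.mem_of_subset_leafC hleaf hx)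
  · exact not_isAnchored_of_mem_restQ houter.1 hi hanch'

theorem mem_Jnat_of_mem_JIset (hi : i ∈ JIset Cl CI Q N k I) {v : W} (hvI : v ∈ CI I)
    (hvQ : v ∈ IprimeQ Cl Q N k) : i ∈ Jnat Cl N k v :=
  mem_iInter₂.1 hi v ⟨hvI, hvQ⟩

theorem JIset_anti (h : CI I ⊆ CI I') : JIset Cl CI Q N k I' ⊆ JIset Cl CI Q N k I :=
  biInter_subset_biInter_left (inter_subset_inter_left _ h)

theorem mem_JIset_of_subset_leafC (hcompatN : ∀ v, ∀ i ∈ Icc 1 k, Compatible Cl v (N i))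
    (hx : CI I ⊆ leafC Cl x) (hi : i ∈ Icc 1 k) (hxi : x ∈ N i) : i ∈ JIset Cl CI Q N k I := by
  refine mem_iInter₂.2 fun v ⟨hvI, hvQ⟩ => ⟨hi, ?_⟩
  rcases hcompatN v i hi with hsub | hsup | hdisj
  · exact absurd (mem_biUnion hi hsub) hvQ.2
  · exact hsup
  · exact absurd hxi ((disjoint_iff_inter_eq_empty.2 hdisj).notMem_of_mem_left (hx hvI))

theorem inter_IprimeQ_nonempty_of_mem_restQ (hNunion : (⋃ i ∈ Icc 1 k, N i) = Q)
    (h : I ∈ restQ Cl CI Q N k) : (CI I ∩ IprimeQ Cl Q N k).Nonempty := by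
  rcases h.1 with ⟨ℓ, rfl, hI⟩ | ⟨_, ⟨v, hvI, hvQ⟩, _⟩
  · -- Some part equals the one-leaf node `Q`, and `I` is inner for that part.
    obtain ⟨i, hi, hℓi⟩ := mem_iUnion₂.1 (hNunion.ge (mem_singleton ℓ))
    have hNi : N i = {ℓ} :=
      (hNunion.le.trans' (subset_biUnion_of_mem hi)).antisymm (singleton_subset_iff.2 hℓi)
    exact absurd (.inr ⟨ℓ, hNi, hI⟩) (not_isAnchored_of_mem_restQ h hi)
  · refine ⟨v, hvI, hvQ, fun hv => ?_⟩
    obtain ⟨i, hi, hvi⟩ := mem_iUnion₂.1 hv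
    exact not_isAnchored_of_mem_restQ h hi (.inl ⟨v, hvI, hvi⟩)

theorem bddAbove_JIset_of_mem_restQ (hNunion : (⋃ i ∈ Icc 1 k, N i) = Q)
    (h : I ∈ restQ Cl CI Q N k) : BddAbove (JIset Cl CI Q N k I) := by
  obtain ⟨v, hvI, hvQ⟩ := inter_IprimeQ_nonempty_of_mem_restQ hNunion h
  exact ⟨k, fun j hj => (mem_Jnat_of_mem_JIset hj hvI hvQ).1.2⟩

theorem JIset_nonempty_of_mem_restQ (hHelly : (⋂ v ∈ CI I, Cl v).Nonempty)
    (hNunion : (⋃ i ∈ Icc 1 k, N i) = Q) (hcompatN : ∀ v, ∀ i ∈ Icc 1 k, Compatible Cl v (N i))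
    (h : I ∈ restQ Cl CI Q N k) : (JIset Cl CI Q N k I).Nonempty := by
  obtain ⟨v, hvI, hvQ⟩ := inter_IprimeQ_nonempty_of_mem_restQ hNunion h
  obtain ⟨x, hx⟩ := exists_subset_leafC hHelly
  have hxQ : x ∈ Q := hvQ.1.1 (hx hvI)
  obtain ⟨i, hi, hxi⟩ := mem_iUnion₂.1 (hNunion.ge hxQ)
  exact ⟨i, mem_JIset_of_subset_leafC hcompatN hx hi hxi⟩

theorem one_notMem_or_last_notMem_JIset_of_mem_restQ (hNunion : (⋃ i ∈ Icc 1 k, N i) = Q)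
    (hJint : ∀ v ∈ IprimeQ Cl Q N k, IsIntervalIn (Jnat Cl N k v)) (h : I ∈ restQ Cl CI Q N k) :
    1 ∉ JIset Cl CI Q N k I ∨ k ∉ JIset Cl CI Q N k I := by
  by_contra! ⟨h1, hk⟩
  obtain ⟨v, hvI, hvQ⟩ := inter_IprimeQ_nonempty_of_mem_restQ hNunion h
  have hQv : Q ⊆ Cl v := hNunion.ge.trans <| iUnion₂_subset fun j hj =>
    (hJint v hvQ 1 j k hj.1 hj.2 (mem_Jnat_of_mem_JIset h1 hvI hvQ)
      (mem_Jnat_of_mem_JIset hk hvI hvQ)).2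
  exact hvQ.1.2 hQv

theorem leftSaturated_iff_not_exists : LeftSaturated Cl Q N k S j ↔
    ¬ ∃ v ∈ IprimeQ Cl Q N k \ S, j - 1 ∈ Jnat Cl N k v ∧ j ∈ Jnat Cl N k v := by
  grind [LeftSaturated]

theorem rightSaturated_iff_not_exists : RightSaturated Cl Q N k S j ↔
    ¬ ∃ v ∈ IprimeQ Cl Q N k \ S, j ∈ Jnat Cl N k v ∧ j + 1 ∈ Jnat Cl N k v := by
  grind [RightSaturated]

theorem LeftSaturated.mono (h : LeftSaturated Cl Q N k S j) (hST : S ⊆ T) :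
    LeftSaturated Cl Q N k T j :=
  fun v hv hl hr => hST (h v hv hl hr)

theorem RightSaturated.mono (h : RightSaturated Cl Q N k S j) (hST : S ⊆ T) :
    RightSaturated Cl Q N k T j :=
  fun v hv hl hr => hST (h v hv hl hr)

theorem not_discarded_iff : ¬ Discarded Cl CI Q N k I ↔
    LeftSaturated Cl Q N k (CI I) (jLo Cl CI Q N k I) ∨
      RightSaturated Cl Q N k (CI I) (jHi Cl CI Q N k I) := by
  rw [leftSaturated_iff_not_exists, rightSaturated_iff_not_exists, Discarded, not_and_or]

theorem isLeast_or_isGreatest_of_mem_outerSet (hHelly : (⋂ v ∈ CI I, Cl v).Nonempty)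
    (hNunion : (⋃ i ∈ Icc 1 k, N i) = Q) (hcompatN : ∀ v, ∀ i ∈ Icc 1 k, Compatible Cl v (N i))
    (h : I ∈ outerSet Cl CI Q N k i) :
    (IsLeast (JIset Cl CI Q N k I) i ∧ LeftSaturated Cl Q N k (CI I) i) ∨
      (IsGreatest (JIset Cl CI Q N k I) i ∧ RightSaturated Cl Q N k (CI I) i) := by
  obtain ⟨hrest, hdisc, hends⟩ := h
  have hne := JIset_nonempty_of_mem_restQ hHelly hNunion hcompatN hrest
  have hbdd := bddAbove_JIset_of_mem_restQ hNunion hrest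
  have hlo : IsLeast (JIset Cl CI Q N k I) (jLo Cl CI Q N k I) :=
    ⟨Nat.sInf_mem hne, fun _ => Nat.sInf_le⟩
  have hhi : IsGreatest (JIset Cl CI Q N k I) (jHi Cl CI Q N k I) :=
    ⟨Nat.sSup_mem hne hbdd, fun _ => le_csSup hbdd⟩
  rcases hends with ⟨heq, rfl⟩ | ⟨_, rfl, hleft⟩ | ⟨_, rfl, hright⟩
  · refine (not_discarded_iff.1 hdisc).imp (fun hl => ⟨hlo, hl⟩) fun hr => ?_
    exact heq ▸ ⟨hhi, hr⟩
  · exact .inl ⟨hlo, leftSaturated_iff_not_exists.2 hleft⟩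
  · exact .inr ⟨hhi, rightSaturated_iff_not_exists.2 hright⟩

theorem mem_JIset_of_mem_compSet (hleaf : ∀ ℓ ℓ' : Λ, ℓ ≠ ℓ' → ¬ leafC Cl ℓ ⊆ leafC Cl ℓ')
    (hHelly : (⋂ v ∈ CI I, Cl v).Nonempty) (hNunion : (⋃ i ∈ Icc 1 k, N i) = Q)
    (hcompatN : ∀ v, ∀ i ∈ Icc 1 k, Compatible Cl v (N i)) (hi : i ∈ Icc 1 k)
    (h : I ∈ compSet Cl CI Q N k i) : i ∈ JIset Cl CI Q N k I := by
  rcases isAnchored_or_mem_outerSet h with hanch | houter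
  · obtain ⟨x, hx⟩ := exists_subset_leafC hHelly
    exact mem_JIset_of_subset_leafC hcompatN hx hi (hanch.mem_of_subset_leafC hleaf hx)
  · rcases isLeast_or_isGreatest_of_mem_outerSet hHelly hNunion hcompatN houter
      with ⟨hleast, _⟩ | ⟨hgreatest, _⟩
    · exact hleast.1
    · exact hgreatest.1

/- A vertex provided by Property (Q) for `i < j` would, by saturation, belong to `C(I)`, although
its `J`-set misses `i` or `j`. -/
theorem not_rightSaturated_of_leftSaturated (hNunion : (⋃ i ∈ Icc 1 k, N i) = Q)
    (hJint : ∀ v ∈ IprimeQ Cl Q N k, IsIntervalIn (Jnat Cl N k v))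
    (hQprop : PropertyQ Cl Q N k)
    (h : I ∈ restQ Cl CI Q N k) (hi : 1 ≤ i) (hij : i < j) (hj : j ≤ k)
    (hiJ : i ∈ JIset Cl CI Q N k I) (hjJ : j ∈ JIset Cl CI Q N k I)
    (hleft : LeftSaturated Cl Q N k (CI I) i) : ¬ RightSaturated Cl Q N k (CI I) j := by
  intro hright
  have hne : (i, j) ≠ (1, k) := by
    rintro ⟨⟩
    exact (one_notMem_or_last_notMem_JIset_of_mem_restQ hNunion hJint h).elim (· hiJ) (· hjJ)
  obtain ⟨v, hvQ, ⟨hiv, hjv, hjv'⟩ | ⟨hiv', hiv, hjv⟩⟩ := hQprop i j hi hij hj hne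
  · exact hiv (mem_Jnat_of_mem_JIset hiJ (hright v hvQ hjv hjv') hvQ)
  · exact hjv (mem_Jnat_of_mem_JIset hjJ (hleft v hvQ hiv' hiv) hvQ)

theorem notMem_JIset_of_mem_outerSet (hHelly : ∀ I, (⋂ v ∈ CI I, Cl v).Nonempty)
    (hNunion : (⋃ i ∈ Icc 1 k, N i) = Q) (hcompatN : ∀ v, ∀ i ∈ Icc 1 k, Compatible Cl v (N i))
    (hJint : ∀ v ∈ IprimeQ Cl Q N k, IsIntervalIn (Jnat Cl N k v))
    (hQprop : PropertyQ Cl Q N k)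
    (hi : i ∈ Icc 1 k) (hj : j ∈ Icc 1 k) (hij : i ≠ j) (hI : I ∈ outerSet Cl CI Q N k i)
    (hI' : I' ∈ outerSet Cl CI Q N k j) (hsub : CI I ⊆ CI I') : i ∉ JIset Cl CI Q N k I' := by
  intro hiJ
  have not_saturated {a b : ℕ} := not_rightSaturated_of_leftSaturated (i := a) (j := b)
    hNunion hJint hQprop hI'.1
  rcases isLeast_or_isGreatest_of_mem_outerSet (hHelly I) hNunion hcompatN hI
      with ⟨hleast, hleft⟩ | ⟨hgreatest, hright⟩ <;>
    rcases isLeast_or_isGreatest_of_mem_outerSet (hHelly I') hNunion hcompatN hI'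
      with ⟨hleast', hleft'⟩ | ⟨hgreatest', hright'⟩
  · exact hij ((hleast.2 (JIset_anti hsub hleast'.1)).antisymm (hleast'.2 hiJ))
  · exact not_saturated hi.1 ((hgreatest'.2 hiJ).lt_of_ne hij) hj.2 hiJ hgreatest'.1
      (hleft.mono hsub) hright'
  · exact not_saturated hj.1 ((hleast'.2 hiJ).lt_of_ne hij.symm) hi.2 hleast'.1 hiJ
      hleft' (hright.mono hsub)
  · exact hij ((hgreatest'.2 hiJ).antisymm (hgreatest.2 (JIset_anti hsub hgreatest'.1)))

end

theorem stmt15_general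
    (Cl : W → Set Λ) (CI : ι → Set W)
    (hleaf : ∀ ℓ ℓ' : Λ, ℓ ≠ ℓ' → ¬ leafC Cl ℓ ⊆ leafC Cl ℓ')
    (hHelly : ∀ I, (⋂ v ∈ CI I, Cl v).Nonempty)
    (Q : Set Λ) (k : ℕ) (N : ℕ → Set Λ)
    (hNdisj : ∀ i ∈ Icc 1 k, ∀ j ∈ Icc 1 k, i ≠ j → N i ∩ N j = ∅)
    (hNunion : (⋃ i ∈ Icc 1 k, N i) = Q)
    (hcompatN : ∀ v, ∀ i ∈ Icc 1 k, Compatible Cl v (N i))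
    (hJint : ∀ v ∈ IprimeQ Cl Q N k, IsIntervalIn (Jnat Cl N k v))
    (hQprop : PropertyQ Cl Q N k)
    (i₁ i₂ i₃ : ℕ) (hi₁ : i₁ ∈ Icc 1 k) (hi₂ : i₂ ∈ Icc 1 k) (hi₃ : i₃ ∈ Icc 1 k)
    (h₁₂ : i₁ ≠ i₂) (I₁ I₂ I₃ : ι)
    (hI₁ : I₁ ∈ compSet Cl CI Q N k i₁)
    (hI₂ : I₂ ∈ compSet Cl CI Q N k i₂)
    (hI₃ : I₃ ∈ compSet Cl CI Q N k i₃)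
    (hsub₁₂ : CI I₁ ⊆ CI I₂) (hsub₂₃ : CI I₂ ⊆ CI I₃) :
    (i₁ < i₂ → i₁ < i₃) ∧ (i₂ < i₁ → i₃ < i₁) := by
  have hi₂J : i₂ ∈ JIset Cl CI Q N k I₂ :=
    mem_JIset_of_mem_compSet hleaf (hHelly I₂) hNunion hcompatN hi₂ hI₂
  have hi₃J : i₃ ∈ JIset Cl CI Q N k I₂ :=
    JIset_anti hsub₂₃ (mem_JIset_of_mem_compSet hleaf (hHelly I₃) hNunion hcompatN hi₃ hI₃)
  have houter₁ : I₁ ∈ outerSet Cl CI Q N k i₁ :=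
    mem_outerSet_of_subset hleaf (hHelly I₂) hi₁ (hNdisj i₁ hi₁ i₂ hi₂ h₁₂) hI₁ hI₂ hsub₁₂
  have hne : i₁ ≠ i₃ := by
    rintro rfl
    have houter₂ : I₂ ∈ outerSet Cl CI Q N k i₂ :=
      mem_outerSet_of_subset hleaf (hHelly I₃) hi₂ (hNdisj i₂ hi₂ i₁ hi₁ h₁₂.symm) hI₂ hI₃ hsub₂₃
    exact notMem_JIset_of_mem_outerSet hHelly hNunion hcompatN hJint hQprop hi₁ hi₂ h₁₂
      houter₁ houter₂ hsub₁₂ hi₃J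
  rcases isLeast_or_isGreatest_of_mem_outerSet (hHelly I₁) hNunion hcompatN houter₁
      with ⟨hleast, _⟩ | ⟨hgreatest, _⟩
  · have hle₂ : i₁ ≤ i₂ := hleast.2 (JIset_anti hsub₁₂ hi₂J)
    have hle₃ : i₁ ≤ i₃ := hleast.2 (JIset_anti hsub₁₂ hi₃J)
    omega
  · have hle₂ : i₂ ≤ i₁ := hgreatest.2 (JIset_anti hsub₁₂ hi₂J)
    have hle₃ : i₃ ≤ i₁ := hgreatest.2 (JIset_anti hsub₁₂ hi₃J)
    omega

theorem stmt15 [Fintype Λ] [Fintype W] [Fintype ι]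
    (Cl : W → Set Λ) (CI : ι → Set W)
    (hCl : ∀ v, (Cl v).Nonempty)
    (hleaf : ∀ ℓ ℓ' : Λ, ℓ ≠ ℓ' → ¬ leafC Cl ℓ ⊆ leafC Cl ℓ')
    (hCI : ∀ I, (CI I).Nonempty)
    (hHelly : ∀ I, (⋂ v ∈ CI I, Cl v).Nonempty)
    (Q : Set Λ) (hQne : Q.Nonempty)
    (k : ℕ) (hk : 3 ≤ k)
    (N : ℕ → Set Λ)
    (hNne : ∀ i ∈ Set.Icc 1 k, (N i).Nonempty)
    (hNdisj : ∀ i ∈ Set.Icc 1 k, ∀ j ∈ Set.Icc 1 k, i ≠ j → N i ∩ N j = ∅)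
    (hNunion : (⋃ i ∈ Set.Icc 1 k, N i) = Q)
    (hcompatQ : ∀ v, Compatible Cl v Q)
    (hcompatN : ∀ v, ∀ i ∈ Set.Icc 1 k, Compatible Cl v (N i))
    (hJint : ∀ v ∈ IprimeQ Cl Q N k, IsIntervalIn (Jnat Cl N k v))
    (hQprop : ∀ j₁ j₂ : ℕ, 1 ≤ j₁ → j₁ < j₂ → j₂ ≤ k → (j₁, j₂) ≠ (1, k) →
      ∃ v ∈ IprimeQ Cl Q N k,
        (j₁ ∉ Jnat Cl N k v ∧ j₂ ∈ Jnat Cl N k v ∧ j₂ + 1 ∈ Jnat Cl N k v) ∨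
        (j₁ - 1 ∈ Jnat Cl N k v ∧ j₁ ∈ Jnat Cl N k v ∧ j₂ ∉ Jnat Cl N k v))
    (i₁ i₂ i₃ : ℕ) (hi₁ : i₁ ∈ Set.Icc 1 k) (hi₂ : i₂ ∈ Set.Icc 1 k)
    (hi₃ : i₃ ∈ Set.Icc 1 k) (h₁₂ : i₁ ≠ i₂)
    (I₁ I₂ I₃ : ι)
    (hI₁ : I₁ ∈ compSet Cl CI Q N k i₁)
    (hI₂ : I₂ ∈ compSet Cl CI Q N k i₂)
    (hI₃ : I₃ ∈ compSet Cl CI Q N k i₃)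
    (hne₁₂ : I₁ ≠ I₂) (hne₂₃ : I₂ ≠ I₃)
    (hsub₁₂ : CI I₁ ⊆ CI I₂) (hsub₂₃ : CI I₂ ⊆ CI I₃) :
    (i₁ < i₂ → i₁ < i₃) ∧ (i₂ < i₁ → i₃ < i₁) :=
  stmt15_general Cl CI hleaf hHelly Q k N hNdisj hNunion hcompatN hJint hQprop
    i₁ i₂ i₃ hi₁ hi₂ hi₃ h₁₂ I₁ I₂ I₃ hI₁ hI₂ hI₃ hsub₁₂ hsub₂₃
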